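/- arXiv:2401.06451 — 6 statements merged into one kernel-verified Lean document; each statement's English description precedes it below -/
import Mathlib

section
/- In any Kripke model of the class KH, each hope relation H_i is a partial equivalence relation, i.e., H_i is symmetric and transitive. -/
/-- A Kripke model (raw data): a valuation on atomic propositions (coded by `ℕ`),
and for each of the `n` agents a knowledge relation `K i` and a hope relation `H i`
on the set of worlds `W`. -/
structure Model (n : ℕ) (W : Type) where
  val : ℕ → W → Prop
  K : Fin n → W → W → Prop
  H : Fin n → W → W → Prop

/-- Membership in the class KH: each `K i` is an equivalence relation, each `H i` is
shift-serial, `H i ⊆ K i` (HinK), and oneH. -/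
def Model.KH {n : ℕ} {W : Type} (M : Model n W) : Prop :=
  (∀ i, Equivalence (M.K i)) ∧
  (∀ i w v, M.H i w v → ∃ z, M.H i v z) ∧
  (∀ i w v, M.H i w v → M.K i w v) ∧
  (∀ i w v, (∃ x, M.H i w x) → (∃ x, M.H i v x) → M.K i w v → M.H i w v)

/-- In any Kripke model of the class KH, each hope relation `H i` is a
partial equivalence relation, i.e., it is symmetric and transitive. -/
theorem hope_symm_trans {n : ℕ} (hn : 0 < n) {W : Type} [Nonempty W]
    (M : Model n W) (hM : M.KH) (i : Fin n) :
    Symmetric (M.H i) ∧ Transitive (M.H i) := by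
  obtain ⟨hK, hS, hHK, h1⟩ := hM
  refine ⟨fun w v h => ?_, fun w v z h h' => ?_⟩
  · exact h1 i v w (hS i w v h) ⟨v, h⟩ ((hK i).symm (hHK i w v h))
  · exact h1 i w z ⟨v, h⟩ (hS i v z h') ((hK i).trans (hHK i w v h) (hHK i v z h'))
end

section
/- If M = (W,π,K,H) is a Kripke model in the class KH and φ⃗ = (φ_1,...,φ_n) is a tuple of formulas of the language L_KH^pub, then the publicly updated model M^{φ⃗} = (W,π,K,H^{φ⃗}) is again in the class KH; that is, each updated hope relation H_i^{φ_i} is shift-serial, is contained in K_i (HinK), and satisfies oneH. -/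
/-- Formulas of the language `L_KH^pub`: atoms, negation, conjunction, knowledge `K i`,
hope `H i`, and public hope update `[φ_1,…,φ_n]ψ` (the tuple given as `Fin n → Form n`). -/
inductive Form (n : ℕ) : Type where
  | atom : ℕ → Form n
  | neg : Form n → Form n
  | and : Form n → Form n → Form n
  | know : Fin n → Form n → Form n
  | hope : Fin n → Form n → Form n
  | upd : (Fin n → Form n) → Form n → Form n

/-- Replace the hope relations: `w H_i^χ v` iff `w K_i v`, `c i` holds at `w`, and at `v`. -/
def Model.hopeUpd {n : ℕ} {W : Type} (M : Model n W) (c : Fin n → W → Prop) : Model n W where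
  val := M.val
  K := M.K
  H := fun i w v => M.K i w v ∧ c i w ∧ c i v

/-- Truth at a world. -/
def sat {n : ℕ} {W : Type} : Model n W → W → Form n → Prop
  | M, w, .atom p => M.val p w
  | M, w, .neg φ => ¬ sat M w φ
  | M, w, .and φ ψ => sat M w φ ∧ sat M w ψ
  | M, w, .know i φ => ∀ v, M.K i w v → sat M v φ
  | M, w, .hope i φ => ∀ v, M.H i w v → sat M v φ
  | M, w, .upd φs ψ => sat (M.hopeUpd (fun i v => sat M v (φs i))) w ψ

/-- The publicly updated model `M^{φ⃗}`. -/
def Model.pubUpdate {n : ℕ} {W : Type} (M : Model n W) (φs : Fin n → Form n) : Model n W :=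
  M.hopeUpd (fun i v => sat M v (φs i))

def ftop {n : ℕ} : Form n := .neg (.and (.atom 0) (.neg (.atom 0)))
def fbot {n : ℕ} : Form n := .neg ftop
def fimpl {n : ℕ} (φ ψ : Form n) : Form n := .neg (.and φ (.neg ψ))
def forr {n : ℕ} (φ ψ : Form n) : Form n := .neg (.and (.neg φ) (.neg ψ))
def fiff {n : ℕ} (φ ψ : Form n) : Form n := .and (fimpl φ ψ) (fimpl ψ φ)
/-- `¬H_i⊥`: agent `i` is correct. -/
def fcorrect {n : ℕ} (i : Fin n) : Form n := .neg (.hope i fbot)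

/-- Validity on the class KH: true at every world of every (nonempty) model in KH. -/
def Valid {n : ℕ} (φ : Form n) : Prop :=
  ∀ (W : Type) (M : Model n W), Nonempty W → M.KH → ∀ w : W, sat M w φ

/-- if `M ∈ KH` and `φ⃗` is a tuple of `L_KH^pub`-formulas, then the publicly
updated model `M^{φ⃗}` is again in KH (each updated hope relation is shift-serial,
contained in `K i`, and satisfies oneH; the knowledge relations are unchanged). -/
theorem pubUpdate_KH {n : ℕ} (hn : 0 < n) {W : Type} [Nonempty W]
    (M : Model n W) (hM : M.KH) (φs : Fin n → Form n) :
    (M.pubUpdate φs).KH := by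
  refine ⟨hM.1, ?_, ?_, ?_⟩
  · rintro i w v ⟨_, _, hv⟩
    exact ⟨v, (hM.1 i).refl v, hv, hv⟩
  · rintro i w v ⟨h, _⟩
    exact h
  · rintro i w v ⟨_, _, hw, _⟩ ⟨_, _, hv, _⟩ h
    exact ⟨h, hw, hv⟩
end

section
/- Soundness of KH^pub: for every formula φ ∈ L_KH^pub, if φ is derivable in the axiom system KH^pub, then φ is valid on the class KH (true at every world of every model in KH). -/
/-- `φ` is a propositional tautology: it is true under every assignment of truth values
to formulas that respects negation and conjunction (atoms, `K`, `H`, and update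
formulas are treated as opaque). -/
def Tautology {n : ℕ} (φ : Form n) : Prop :=
  ∀ v : Form n → Prop,
    (∀ ψ, v (.neg ψ) ↔ ¬ v ψ) → (∀ ψ χ, v (.and ψ χ) ↔ (v ψ ∧ v χ)) → v φ

/-- The axiom system `KH^pub`: the system `KH` (propositional tautologies, `H†`, `K^K`,
`4^K`, `5^K`, `T^K`, the `KH` axiom, modus ponens, necessitation for `K_i`) extended
with the reduction axioms for public hope updates. -/
inductive DerivPub {n : ℕ} : Form n → Prop where
  | taut {φ} : Tautology φ → DerivPub φ
  | hdag (i : Fin n) : DerivPub (.hope i (.neg (.hope i fbot)))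
  | kK (i : Fin n) (φ ψ : Form n) :
      DerivPub (fimpl (.and (.know i (fimpl φ ψ)) (.know i φ)) (.know i ψ))
  | fourK (i : Fin n) (φ : Form n) : DerivPub (fimpl (.know i φ) (.know i (.know i φ)))
  | fiveK (i : Fin n) (φ : Form n) :
      DerivPub (fimpl (.neg (.know i φ)) (.know i (.neg (.know i φ))))
  | tK (i : Fin n) (φ : Form n) : DerivPub (fimpl (.know i φ) φ)
  | kh (i : Fin n) (φ : Form n) :
      DerivPub (fiff (.hope i φ) (fimpl (fcorrect i) (.know i (fimpl (fcorrect i) φ))))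
  | mp {φ ψ : Form n} : DerivPub (fimpl φ ψ) → DerivPub φ → DerivPub ψ
  | necK {φ : Form n} (i : Fin n) : DerivPub φ → DerivPub (.know i φ)
  | redAtom (φs : Fin n → Form n) (p : ℕ) : DerivPub (fiff (.upd φs (.atom p)) (.atom p))
  | redNeg (φs : Fin n → Form n) (ψ : Form n) :
      DerivPub (fiff (.upd φs (.neg ψ)) (.neg (.upd φs ψ)))
  | redAnd (φs : Fin n → Form n) (ψ ξ : Form n) :
      DerivPub (fiff (.upd φs (.and ψ ξ)) (.and (.upd φs ψ) (.upd φs ξ)))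
  | redKnow (φs : Fin n → Form n) (i : Fin n) (ψ : Form n) :
      DerivPub (fiff (.upd φs (.know i ψ)) (.know i (.upd φs ψ)))
  | redHope (φs : Fin n → Form n) (i : Fin n) (ψ : Form n) :
      DerivPub (fiff (.upd φs (.hope i ψ))
        (fimpl (φs i) (.know i (fimpl (φs i) (.upd φs ψ)))))
  | redUpd (φs χs : Fin n → Form n) (ψ : Form n) :
      DerivPub (fiff (.upd φs (.upd χs ψ)) (.upd (fun i => .upd φs (χs i)) ψ))

theorem sat_fimpl {n : ℕ} {W : Type} (M : Model n W) (w : W) (φ ψ : Form n) :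
    sat M w (fimpl φ ψ) ↔ (sat M w φ → sat M w ψ) := by
  simp only [fimpl, sat]; tauto

theorem sat_fiff {n : ℕ} {W : Type} (M : Model n W) (w : W) (φ ψ : Form n) :
    sat M w (fiff φ ψ) ↔ (sat M w φ ↔ sat M w ψ) := by
  simp only [fiff, sat, sat_fimpl]; tauto

theorem sat_fbot {n : ℕ} {W : Type} (M : Model n W) (w : W) :
    ¬ sat M w (fbot : Form n) := by
  simp only [fbot, ftop, sat]; tauto

theorem sat_fcorrect {n : ℕ} {W : Type} (M : Model n W) (w : W) (i : Fin n) :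
    sat M w (fcorrect i) ↔ ∃ v, M.H i w v := by
  simp only [fcorrect, sat, sat_fbot]
  push Not
  simp

/-- soundness of `KH^pub`: every formula derivable in `KH^pub` is valid
on the class KH. -/
theorem khpub_sound {n : ℕ} (hn : 0 < n) (φ : Form n) (h : DerivPub φ) : Valid φ := by
  induction h with
  | taut h =>
    intro W M _ _ w
    exact h (fun ψ => sat M w ψ) (fun ψ => by simp only [sat]) (fun ψ χ => by simp only [sat])
  | hdag i =>
    intro W M _ hM w v hv
    exact (sat_fcorrect M v i).2 (hM.2.1 i w v hv)
  | kK i φ ψ =>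
    intro W M _ hM w
    simp only [sat_fimpl, sat]
    exact fun h v hv => h.1 v hv (h.2 v hv)
  | fourK i φ =>
    intro W M _ hM w
    simp only [sat_fimpl, sat]
    exact fun h v hv u hu => h u ((hM.1 i).trans hv hu)
  | fiveK i φ =>
    intro W M _ hM w
    simp only [sat_fimpl, sat]
    exact fun h v hv h' => h fun u hu => h' u ((hM.1 i).trans ((hM.1 i).symm hv) hu)
  | tK i φ =>
    intro W M _ hM w
    simp only [sat_fimpl, sat]
    exact fun h => h w ((hM.1 i).refl w)
  | kh i φ =>
    intro W M _ hM w
    simp only [sat_fiff, sat_fimpl, sat, sat_fcorrect]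
    constructor
    · exact fun h hw v hv hc => h v (hM.2.2.2 i w v hw hc hv)
    · exact fun h v hv => h ⟨v, hv⟩ v (hM.2.2.1 i w v hv) (hM.2.1 i w v hv)
  | mp _ _ ih1 ih2 =>
    intro W M hW hM w
    exact (sat_fimpl M w _ _).1 (ih1 W M hW hM w) (ih2 W M hW hM w)
  | necK i _ ih =>
    intro W M hW hM w v _
    exact ih W M hW hM v
  | redAtom φs p =>
    intro W M _ hM w
    simp only [sat_fiff, sat, Model.hopeUpd]
  | redNeg φs ψ =>
    intro W M _ hM w
    simp only [sat_fiff, sat]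
  | redAnd φs ψ ξ =>
    intro W M _ hM w
    simp only [sat_fiff, sat]
  | redKnow φs i ψ =>
    intro W M _ hM w
    simp only [sat_fiff, sat]
    exact Iff.rfl
  | redHope φs i ψ =>
    intro W M _ hM w
    simp only [sat_fiff, sat_fimpl, sat]
    constructor
    · exact fun h hw v hv hc => h v ⟨hv, hw, hc⟩
    · exact fun h v hv => h hv.2.1 v hv.1 hv.2.2
  | redUpd φs χs ψ =>
    intro W M _ hM w
    simp only [sat_fiff, sat]
    exact Iff.rfl
end

section
/- For each reduction axiom θ_l ↔ θ_r of the system KH^pub (namely [φ⃗]p ↔ p; [φ⃗]¬ψ ↔ ¬[φ⃗]ψ; [φ⃗](ψ∧ξ) ↔ [φ⃗]ψ ∧ [φ⃗]ξ; [φ⃗]K_iψ ↔ K_i[φ⃗]ψ; [φ⃗]H_iψ ↔ (φ_i → K_i(φ_i → [φ⃗]ψ)), with the right-hand side written using only ¬ and ∧ as ¬(φ_i ∧ ¬K_i¬(φ_i ∧ ¬[φ⃗]ψ)); and [φ⃗][χ⃗]ψ ↔ [[φ⃗]χ_1,...,[φ⃗]χ_n]ψ), the complexity of the left-hand side is strictly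 greater than the complexity of the right-hand side: c(θ_l) > c(θ_r). -/
/-- The complexity `c` of `L_KH^pub`-formulas: `c(p)=1`, `c(¬φ)=c(φ)+1`,
`c(φ∧ξ)=max(c(φ),c(ξ))+1`, `c(K_iφ)=c(φ)+1`, `c(H_iφ)=c(φ)+4`, and
`c([φ⃗]ξ)=(c(φ⃗)+1)·c(ξ)` where `c(φ⃗)=max_i c(φ_i)`. -/
def c {n : ℕ} : Form n → ℕ
  | .atom _ => 1
  | .neg φ => c φ + 1
  | .and φ ξ => max (c φ) (c ξ) + 1
  | .know _ φ => c φ + 1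
  | .hope _ φ => c φ + 4
  | .upd φs ξ => ((Finset.univ.sup fun i => c (φs i)) + 1) * c ξ

theorem c_pos_aux {n : ℕ} (φ : Form n) : 1 ≤ c φ := by
  induction φ with
  | upd φs ξ _ ih =>
    simp only [c]
    exact Nat.mul_pos (Nat.succ_pos _) ih
  | _ => simp only [c]; omega

/-- for each reduction axiom `θ_l ↔ θ_r` of `KH^pub`, the complexity of the
left-hand side strictly exceeds the complexity of the right-hand side (the right-hand
side of the hope axiom being written with `¬`,`∧` only, via `fimpl a b = ¬(a ∧ ¬b)`). -/
theorem complexity_decreases {n : ℕ} (hn : 0 < n)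
    (φs χs : Fin n → Form n) (ψ ξ : Form n) (p : ℕ) (i : Fin n) :
    c (Form.upd φs (.atom p)) > c (Form.atom p : Form n) ∧
    c (Form.upd φs (.neg ψ)) > c (Form.neg (.upd φs ψ)) ∧
    c (Form.upd φs (.and ψ ξ)) > c (Form.and (.upd φs ψ) (.upd φs ξ)) ∧
    c (Form.upd φs (.know i ψ)) > c (Form.know i (.upd φs ψ)) ∧
    c (Form.upd φs (.hope i ψ)) >
      c (fimpl (φs i) (.know i (fimpl (φs i) (.upd φs ψ)))) ∧
    c (Form.upd φs (.upd χs ψ)) > c (Form.upd (fun j => .upd φs (χs j)) ψ) := by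
  have hx := c_pos_aux ψ
  have hi : c (φs i) ≤ Finset.univ.sup fun j => c (φs j) :=
    Finset.le_sup (f := fun j => c (φs j)) (Finset.mem_univ i)
  have h1 := c_pos_aux (φs i)
  have hT : (Finset.univ.sup fun j => (Finset.univ.sup (fun k => c (φs k)) + 1) * c (χs j)) ≤
      (Finset.univ.sup (fun k => c (φs k)) + 1) * Finset.univ.sup fun j => c (χs j) := by
    apply Finset.sup_le
    intro j _
    exact Nat.mul_le_mul_left _ (Finset.le_sup (f := fun j => c (χs j)) (Finset.mem_univ j))
  simp only [c, fimpl]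
  generalize (Finset.univ.sup fun j => (Finset.univ.sup (fun k => c (φs k)) + 1) * c (χs j)) = R at *
  generalize (Finset.univ.sup fun k => c (φs k)) = S at *
  generalize (Finset.univ.sup fun k => c (χs k)) = T at *
  generalize c ψ = x at *
  generalize c ξ = y at *
  generalize c (φs i) = a at *
  have hS : S + 1 ≤ (S + 1) * x := Nat.le_mul_of_pos_right _ hx
  refine ⟨by omega, ?_, ?_, ?_, ?_, ?_⟩
  · rw [Nat.mul_add]; omega
  · rw [Nat.mul_add, Nat.mul_max_mul_left]; omega
  · rw [Nat.mul_add]; omega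
  · rw [Nat.mul_add]; omega
  · rw [← Nat.mul_assoc]
    apply Nat.mul_lt_mul_of_pos_right _ hx
    rw [Nat.mul_add]; omega
end

section
/- Soundness and completeness of KH^pub: for every formula φ ∈ L_KH^pub, φ is derivable in the axiom system KH^pub if and only if φ is valid on the class KH. (This may assume, as given, that the base system KH is sound and complete for KH with respect to the update-free language L_KH.) -/
/-- The base axiom system `KH` (on the update-free language): propositional tautologies,
`H†`, `K^K`, `4^K`, `5^K`, `T^K`, the `KH` axiom, modus ponens, and necessitation. -/
inductive DerivKH {n : ℕ} : Form n → Prop where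
  | taut {φ} : Tautology φ → DerivKH φ
  | hdag (i : Fin n) : DerivKH (.hope i (.neg (.hope i fbot)))
  | kK (i : Fin n) (φ ψ : Form n) :
      DerivKH (fimpl (.and (.know i (fimpl φ ψ)) (.know i φ)) (.know i ψ))
  | fourK (i : Fin n) (φ : Form n) : DerivKH (fimpl (.know i φ) (.know i (.know i φ)))
  | fiveK (i : Fin n) (φ : Form n) :
      DerivKH (fimpl (.neg (.know i φ)) (.know i (.neg (.know i φ))))
  | tK (i : Fin n) (φ : Form n) : DerivKH (fimpl (.know i φ) φ)
  | kh (i : Fin n) (φ : Form n) :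
      DerivKH (fiff (.hope i φ) (fimpl (fcorrect i) (.know i (fimpl (fcorrect i) φ))))
  | mp {φ ψ : Form n} : DerivKH (fimpl φ ψ) → DerivKH φ → DerivKH ψ
  | necK {φ : Form n} (i : Fin n) : DerivKH φ → DerivKH (.know i φ)

/-- Update-free formulas: the sublanguage `L_KH` of `L_KH^pub`. -/
inductive UpdFree {n : ℕ} : Form n → Prop where
  | atom (p : ℕ) : UpdFree (.atom p)
  | neg {φ} : UpdFree φ → UpdFree (.neg φ)
  | and {φ ψ} : UpdFree φ → UpdFree ψ → UpdFree (.and φ ψ)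
  | know {φ} (i : Fin n) : UpdFree φ → UpdFree (.know i φ)
  | hope {φ} (i : Fin n) : UpdFree φ → UpdFree (.hope i φ)

theorem pub_sound {n : ℕ} {φ : Form n} (h : DerivPub φ) : Valid φ := by
  induction h with
  | taut h =>
    intro W M _ _ w
    exact h (fun ψ => sat M w ψ) (fun ψ => by simp only [sat]) (fun ψ χ => by simp only [sat])
  | hdag i =>
    intro W M _ hM w v hv
    exact (sat_fcorrect M v i).2 (hM.2.1 i w v hv)
  | kK i φ ψ =>
    intro W M _ _ w
    rw [sat_fimpl]
    rintro ⟨h1, h2⟩ v hv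
    exact (sat_fimpl M v φ ψ).1 (h1 v hv) (h2 v hv)
  | fourK i φ =>
    intro W M _ hM w
    rw [sat_fimpl]
    intro h v hv u hu
    exact h u ((hM.1 i).trans hv hu)
  | fiveK i φ =>
    intro W M _ hM w
    rw [sat_fimpl]
    intro h v hv h2
    exact h fun u hu => h2 u ((hM.1 i).trans ((hM.1 i).symm hv) hu)
  | tK i φ =>
    intro W M _ hM w
    rw [sat_fimpl]
    intro h
    exact h w ((hM.1 i).refl w)
  | kh i φ =>
    intro W M _ hM w
    rw [sat_fiff, sat_fimpl, sat_fcorrect]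
    constructor
    · intro h hw v hv
      rw [sat_fimpl, sat_fcorrect]
      intro hv2
      exact h v (hM.2.2.2 i w v hw hv2 hv)
    · intro h v hv
      have := h ⟨v, hv⟩ v (hM.2.2.1 i w v hv)
      rw [sat_fimpl, sat_fcorrect] at this
      exact this (hM.2.1 i w v hv)
  | mp _ _ h1 h2 =>
    intro W M hW hM w
    exact (sat_fimpl M w _ _).1 (h1 W M hW hM w) (h2 W M hW hM w)
  | necK i _ h =>
    intro W M hW hM w v _
    exact h W M hW hM v
  | redAtom φs p =>
    intro W M _ _ w
    rw [sat_fiff]; exact Iff.rfl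
  | redNeg φs ψ =>
    intro W M _ _ w
    rw [sat_fiff]; exact Iff.rfl
  | redAnd φs ψ ξ =>
    intro W M _ _ w
    rw [sat_fiff]; exact Iff.rfl
  | redKnow φs i ψ =>
    intro W M _ _ w
    rw [sat_fiff]; exact Iff.rfl
  | redHope φs i ψ =>
    intro W M _ _ w
    rw [sat_fiff, sat_fimpl]
    constructor
    · intro h hw v hv
      rw [sat_fimpl]
      intro hv2
      exact h v ⟨hv, hw, hv2⟩
    · rintro h v ⟨hv, hw, hv2⟩
      exact (sat_fimpl M v _ _).1 (h hw v hv) hv2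
  | redUpd φs χs ψ =>
    intro W M _ _ w
    rw [sat_fiff]; exact Iff.rfl

theorem pub_of_base {n : ℕ} {φ : Form n} (h : DerivKH φ) : DerivPub φ := by
  induction h with
  | taut h => exact .taut h
  | hdag i => exact .hdag i
  | kK i φ ψ => exact .kK i φ ψ
  | fourK i φ => exact .fourK i φ
  | fiveK i φ => exact .fiveK i φ
  | tK i φ => exact .tK i φ
  | kh i φ => exact .kh i φ
  | mp _ _ h1 h2 => exact .mp h1 h2
  | necK i _ h => exact .necK i h

/-- Propositional consequence from one, two or three derivable premises. -/
theorem pub_taut1 {n : ℕ} {a b : Form n} (ha : DerivPub a)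
    (h : Tautology (fimpl a b)) : DerivPub b := .mp (.taut h) ha

theorem pub_taut2 {n : ℕ} {a b c : Form n} (ha : DerivPub a) (hb : DerivPub b)
    (h : Tautology (fimpl a (fimpl b c))) : DerivPub c := .mp (.mp (.taut h) ha) hb

/-- Provable equivalence. -/
def PEq {n : ℕ} (a b : Form n) : Prop := DerivPub (fiff a b)

theorem PEq.symm {n : ℕ} {a b : Form n} (h : PEq a b) : PEq b a := by
  refine pub_taut1 h ?_
  intro v hn ha
  simp only [fiff, fimpl, hn, ha]; tauto

theorem PEq.refl {n : ℕ} (a : Form n) : PEq a a := by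
  refine .taut ?_
  intro v hn ha
  simp only [fiff, fimpl, hn, ha]; tauto

theorem PEq.trans {n : ℕ} {a b c : Form n} (h : PEq a b) (h' : PEq b c) : PEq a c := by
  refine pub_taut2 h h' ?_
  intro v hn ha
  simp only [fiff, fimpl, hn, ha]; tauto

theorem PEq.neg {n : ℕ} {a b : Form n} (h : PEq a b) : PEq a.neg b.neg := by
  refine pub_taut1 h ?_
  intro v hn ha
  simp only [fiff, fimpl, hn, ha]; tauto

theorem PEq.and {n : ℕ} {a b c d : Form n} (h : PEq a b) (h' : PEq c d) :
    PEq (a.and c) (b.and d) := by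
  refine pub_taut2 h h' ?_
  intro v hn ha
  simp only [fiff, fimpl, hn, ha]; tauto

theorem PEq.impl {n : ℕ} {a b c d : Form n} (h : PEq a b) (h' : PEq c d) :
    PEq (fimpl a c) (fimpl b d) := (h.and h'.neg).neg

theorem know_mono {n : ℕ} (i : Fin n) {a b : Form n} (h : DerivPub (fimpl a b)) :
    DerivPub (fimpl (.know i a) (.know i b)) := by
  refine pub_taut2 (.necK i h) (.kK i a b) ?_
  intro v hn ha
  simp only [fimpl, hn, ha]; tauto

theorem PEq.know {n : ℕ} (i : Fin n) {a b : Form n} (h : PEq a b) :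
    PEq (.know i a) (.know i b) := by
  have h1 : DerivPub (fimpl a b) := by
    refine pub_taut1 h ?_
    intro v hn ha
    simp only [fiff, fimpl, hn, ha]; tauto
  have h2 : DerivPub (fimpl b a) := by
    refine pub_taut1 h ?_
    intro v hn ha
    simp only [fiff, fimpl, hn, ha]; tauto
  refine pub_taut2 (know_mono i h1) (know_mono i h2) ?_
  intro v hn ha
  simp only [fiff, fimpl, hn, ha]; tauto

theorem PEq.hope {n : ℕ} (i : Fin n) {a b : Form n} (h : PEq a b) :
    PEq (.hope i a) (.hope i b) :=
  PEq.trans (DerivPub.kh i a)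
    (PEq.trans (PEq.impl (PEq.refl _) (PEq.know i (PEq.impl (PEq.refl _) h)))
      (PEq.symm (DerivPub.kh i b)))

/-- Having a provably equivalent update-free formula. -/
def Red {n : ℕ} (a : Form n) : Prop := ∃ t, UpdFree t ∧ PEq a t

theorem Red.of {n : ℕ} {a b : Form n} (h : PEq a b) : Red b → Red a :=
  fun ⟨t, ht, e⟩ => ⟨t, ht, h.trans e⟩

theorem Red.neg {n : ℕ} {a : Form n} : Red a → Red a.neg :=
  fun ⟨_, ht, e⟩ => ⟨_, .neg ht, e.neg⟩

theorem Red.and {n : ℕ} {a b : Form n} : Red a → Red b → Red (a.and b) :=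
  fun ⟨_, ht, e⟩ ⟨_, ht', e'⟩ => ⟨_, .and ht ht', e.and e'⟩

theorem Red.impl {n : ℕ} {a b : Form n} (ha : Red a) (hb : Red b) : Red (fimpl a b) :=
  (ha.and hb.neg).neg

theorem Red.know {n : ℕ} (i : Fin n) {a : Form n} : Red a → Red (.know i a) :=
  fun ⟨_, ht, e⟩ => ⟨_, .know i ht, e.know i⟩

theorem Red.hope {n : ℕ} (i : Fin n) {a : Form n} : Red a → Red (.hope i a) :=
  fun ⟨_, ht, e⟩ => ⟨_, .hope i ht, e.hope i⟩

theorem red_upd {n : ℕ} (ψ : Form n) :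
    ∀ φs : Fin n → Form n, (∀ i, Red (φs i)) → Red (.upd φs ψ) := by
  induction ψ with
  | atom p => exact fun φs _ => ⟨_, .atom p, .redAtom φs p⟩
  | neg ψ ih => exact fun φs h => Red.of (.redNeg φs ψ) (ih φs h).neg
  | and ψ χ ih ih' => exact fun φs h => Red.of (.redAnd φs ψ χ) ((ih φs h).and (ih' φs h))
  | know i ψ ih => exact fun φs h => Red.of (.redKnow φs i ψ) ((ih φs h).know i)
  | hope i ψ ih =>
    exact fun φs h => Red.of (.redHope φs i ψ) ((h i).impl (((h i).impl (ih φs h)).know i))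
  | upd χs ψ ihs ih =>
    exact fun φs h => Red.of (.redUpd φs χs ψ) (ih _ fun i => ihs i φs h)

theorem red_all {n : ℕ} (ψ : Form n) : Red ψ := by
  induction ψ with
  | atom p => exact ⟨_, .atom p, PEq.refl _⟩
  | neg ψ ih => exact ih.neg
  | and ψ χ ih ih' => exact ih.and ih'
  | know i ψ ih => exact ih.know i
  | hope i ψ ih => exact ih.hope i
  | upd χs ψ ihs _ => exact red_upd ψ χs ihs

/-- soundness and completeness of `KH^pub`: a formula of `L_KH^pub` is
derivable in `KH^pub` iff it is valid on the class KH. The hypothesis `hbase` is the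
given soundness and completeness of the base system `KH` for the update-free
language `L_KH`. -/
theorem khpub_sound_complete {n : ℕ} (hn : 0 < n)
    (hbase : ∀ φ : Form n, UpdFree φ → (DerivKH φ ↔ Valid φ)) :
    ∀ φ : Form n, DerivPub φ ↔ Valid φ := by
  intro φ
  refine ⟨pub_sound, fun hv => ?_⟩
  obtain ⟨t, ht, e⟩ := red_all φ
  have htv : Valid t := fun W M hW hM w =>
    ((sat_fiff M w φ t).1 (pub_sound e W M hW hM w)).1 (hv W M hW hM w)
  refine pub_taut2 e (pub_of_base ((hbase t ht).2 htv)) ?_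
  intro v hn ha
  simp only [fiff, fimpl, hn, ha]; tauto
end

section
/- For every f ≤ n and every tuple φ⃗ = (φ_1,...,φ_n) of hope update formulas, the formula φ⃗^{n−f} → [φ⃗]Byz_f is valid on the class KH: if in a world at least n−f of the update formulas hold, then after the public hope update with φ⃗ at most f agents are faulty. -/
/-- Conjunction of a list of formulas. -/
def bigAnd {n : ℕ} : List (Form n) → Form n
  | [] => ftop
  | φ :: l => .and φ (bigAnd l)

/-- Disjunction of a list of formulas. -/
def bigOr {n : ℕ} : List (Form n) → Form n
  | [] => fbot
  | φ :: l => forr φ (bigOr l)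

/-- The list of all groups `G ⊆ A` of agents with `|G| = k`. -/
noncomputable def groups (n k : ℕ) : List (Finset (Fin n)) :=
  ((Finset.univ : Finset (Fin n)).powerset.filter (fun G => G.card = k)).toList

/-- `Byz_f := ⋁_{G⊆A, |G|=n−f} ⋀_{i∈G} ¬H_i⊥`: at least `n−f` agents are correct,
i.e., at most `f` agents are faulty. -/
noncomputable def Byz (n f : ℕ) : Form n :=
  bigOr ((groups n (n - f)).map (fun G => bigAnd (G.toList.map (fun i => fcorrect i))))

/-- `φ⃗^k := ⋁_{G⊆A, |G|=k} ⋀_{i∈G} φ_i`: at least `k` of the formulas `φ_i` hold. -/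
noncomputable def vecAtLeast {n : ℕ} (φs : Fin n → Form n) (k : ℕ) : Form n :=
  bigOr ((groups n k).map (fun G => bigAnd (G.toList.map φs)))

theorem sat_bigAnd {n : ℕ} {W : Type} (M : Model n W) (w : W) (l : List (Form n)) :
    sat M w (bigAnd l) ↔ ∀ φ ∈ l, sat M w φ := by
  induction l with
  | nil => simp [bigAnd, ftop, sat]
  | cons a l ih => simp [bigAnd, sat, ih]

theorem sat_bigOr {n : ℕ} {W : Type} (M : Model n W) (w : W) (l : List (Form n)) :
    sat M w (bigOr l) ↔ ∃ φ ∈ l, sat M w φ := by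
  induction l with
  | nil => simp [bigOr, fbot, ftop, sat]
  | cons a l ih =>
    simp only [bigOr, forr, sat, ih, List.mem_cons, exists_eq_or_imp]
    exact or_iff_not_and_not.symm

/-- for every `f ≤ n` and every tuple `φ⃗` of hope update formulas, the
formula `φ⃗^{n−f} → [φ⃗]Byz_f` is valid on the class KH. -/
theorem vec_implies_Byz {n f : ℕ} (hn : 0 < n) (hf : f ≤ n) (φs : Fin n → Form n) :
    Valid (fimpl (vecAtLeast φs (n - f)) (.upd φs (Byz n f))) := by
  intro W M _ hM w
  simp only [fimpl, sat]
  rintro ⟨h1, h2⟩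
  apply h2
  rw [vecAtLeast, sat_bigOr] at h1
  rw [Byz, sat_bigOr]
  obtain ⟨ψ, hψ, hs⟩ := h1
  obtain ⟨G, hG, rfl⟩ := List.mem_map.1 hψ
  refine ⟨_, List.mem_map.2 ⟨G, hG, rfl⟩, ?_⟩
  rw [sat_bigAnd] at hs ⊢
  intro χ hχ
  obtain ⟨i, hi, rfl⟩ := List.mem_map.1 hχ
  have hφ := hs _ (List.mem_map.2 ⟨i, hi, rfl⟩)
  simp only [fcorrect, sat]
  intro h
  have := h w ⟨(hM.1 i).refl w, hφ, hφ⟩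
  simp [fbot, ftop, sat] at this
end
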